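/- Let μ be a Strongly Rayleigh probability measure on the subsets of [n] with μ(∅) = 0, and let A ∈ M_n(ℂ) be hermitian. Then: (1) the expected characteristic polynomial E_μ χ[A(S)] := Σ_{S⊆[n]} μ(S)·χ[A(S)] is real rooted; (2) there exists S ⊆ [n] with μ(S) > 0 such that the largest eigenvalue of A(S) is at most the largest root of E_μ χ[A(S)]; and (3) E_μ χ[A(S)](x) = [ P̄_μ(∂_1,…,∂_n) det(Z−A) ]|_{z_1=⋯=z_n=x}, where Z = diag(z_1,…,z_n) and P̄_μ denotes the flip of the generating polynomial P_μ of μ. -/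

import Mathlib

/-- A multivariate real polynomial is real stable if it does not vanish when all
variables take values in the open upper half plane. -/
def RealStable {σ : Type*} (p : MvPolynomial σ ℝ) : Prop :=
  ∀ z : σ → ℂ, (∀ i, 0 < (z i).im) → (MvPolynomial.aeval z) p ≠ 0

/-- the generating polynomial `P_μ = Σ_S μ(S) z^S` of a measure on subsets of `[n]` -/
noncomputable def genPoly {n : ℕ} (μ : Finset (Fin n) → ℝ) : MvPolynomial (Fin n) ℝ :=
  ∑ S : Finset (Fin n), MvPolynomial.C (μ S) * ∏ i ∈ S, MvPolynomial.X i

/-- the flip `P̄_μ = Σ_S μ(S) z^{[n]∖S}` of the generating polynomial, with complex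
coefficients -/
noncomputable def flipGenPolyC {n : ℕ} (μ : Finset (Fin n) → ℝ) :
    MvPolynomial (Fin n) ℂ :=
  ∑ S : Finset (Fin n), MvPolynomial.C ((μ S : ℝ) : ℂ) * ∏ i ∈ Sᶜ, MvPolynomial.X i

/-- the principal submatrix `A(S)` -/
def subMat {n : ℕ} (A : Matrix (Fin n) (Fin n) ℂ) (S : Finset (Fin n)) :
    Matrix {x // x ∈ S} {x // x ∈ S} ℂ :=
  A.submatrix Subtype.val Subtype.val

/-- the expected characteristic polynomial `E_μ χ[A(S)] = Σ_S μ(S)·χ[A(S)]` -/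
noncomputable def expCharPoly {n : ℕ} (μ : Finset (Fin n) → ℝ)
    (A : Matrix (Fin n) (Fin n) ℂ) : Polynomial ℂ :=
  ∑ S : Finset (Fin n), Polynomial.C ((μ S : ℝ) : ℂ) * (subMat A S).charpoly

/-- `det(Z - A)` as a multivariate polynomial, `Z = diag(z₁,…,zₙ)` -/
noncomputable def detZSub {n : ℕ} (A : Matrix (Fin n) (Fin n) ℂ) :
    MvPolynomial (Fin n) ℂ :=
  (Matrix.diagonal (fun i => MvPolynomial.X i) - A.map MvPolynomial.C).det

/-- applying the differential-operator monomial `∂^m` to `p` -/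
noncomputable def applyMon {σ : Type*} [Fintype σ] {R : Type*} [CommSemiring R]
    (m : σ →₀ ℕ) (p : MvPolynomial σ R) : MvPolynomial σ R :=
  (Finset.univ.toList (α := σ)).foldr
    (fun i g => (fun h => MvPolynomial.pderiv i h)^[m i] g) p

/-- `q(∂)p`: substitute `∂/∂zᵢ` for `zᵢ` in `q` and apply the resulting operator to `p`. -/
noncomputable def diffOp {σ : Type*} [Fintype σ] {R : Type*} [CommSemiring R]
    (q p : MvPolynomial σ R) : MvPolynomial σ R :=
  ∑ m ∈ q.support, MvPolynomial.coeff m q • applyMon m p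

section Pairing

open Matrix

theorem bilinear_pairing_ne_zero {a b c d : ℂ} {ε : ℝ} (hε : 0 < ε)
    (hK : ∀ t s : ℂ, -ε < t.im → 0 < s.im → a + t * b + s * c + t * s * d ≠ 0)
    (hB : ∀ s : ℂ, 0 < s.im → b + s * d ≠ 0) : b + c ≠ 0 := by
  intro h
  obtain rfl : c = -b := by linear_combination h
  rcases eq_or_ne d 0 with rfl | hd
  · have hb : b ≠ 0 := by simpa using hB Complex.I (by simp)
    have h0 := abs_nonneg (a / b).im
    have h1 := le_abs_self (a / b).im
    refine hK (((|(a / b).im| + 1 : ℝ) : ℂ) * Complex.I - a / b)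
      (((|(a / b).im| + 1 : ℝ) : ℂ) * Complex.I) ?_ ?_ ?_
    · rw [Complex.sub_im]
      simp only [Complex.mul_I_im, Complex.ofReal_re]
      linarith
    · simp; linarith
    · field_simp
      ring
  · set β := b / d with hβ
    have hb : b = β * d := by rw [hβ]; field_simp
    have hβim : 0 ≤ β.im := by
      by_contra! hneg
      refine hB (-β) (by simpa using hneg) ?_
      rw [hb]; ring
    set k := -(β ^ 2 + a / d) with hk
    have ha : a = -(k + β ^ 2) * d := by rw [hk]; field_simp; ring
    set R : ℝ := ‖k‖ / ε + 1 with hR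
    have hRpos : 0 < R := by positivity
    have hkR : ‖k‖ / R < ε := by
      rw [div_lt_iff₀ hRpos, hR]
      field_simp
      linarith
    set s : ℂ := (R : ℂ) * Complex.I with hs
    have hsim : s.im = R := by simp [hs]
    have hle : R ≤ ‖s + β‖ := by
      refine le_trans ?_ (Complex.im_le_norm _)
      rw [Complex.add_im, hsim]; linarith
    have hne : s + β ≠ 0 := norm_pos_iff.1 (hRpos.trans_le hle)
    have hsmall : ‖k / (s + β)‖ < ε := by
      rw [norm_div]
      exact (div_le_div_of_nonneg_left (norm_nonneg _) hRpos hle).trans_lt hkR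
    refine hK (β + k / (s + β)) s ?_ (by rw [hsim]; exact hRpos) ?_
    · have := (abs_le.1 (Complex.abs_im_le_norm (k / (s + β)))).1
      rw [Complex.add_im]; linarith
    · rw [ha, hb]
      field_simp
      ring

theorem sum_powerset_mul_ne_zero {ι : Type*} [DecidableEq ι] {ε : ℝ} (hε : 0 < ε)
    (U : Finset ι) (P g : Finset ι → ℂ)
    (hP : ∀ w : ι → ℂ, (∀ i, 0 < (w i).im) → ∑ S ∈ U.powerset, P S * ∏ i ∈ S, w i ≠ 0)
    (hg : ∀ V ⊆ U, ∀ z : ι → ℂ, (∀ i, -ε < (z i).im) →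
      ∑ S ∈ V.powerset, g S * ∏ i ∈ V \ S, z i ≠ 0) :
    ∑ S ∈ U.powerset, P S * g S ≠ 0 := by
  induction U using Finset.induction_on generalizing P g with
  | empty =>
    have h1 := hP (fun _ => Complex.I) (by simp)
    have h2 := hg ∅ le_rfl (fun _ => 0) (fun _ => by simpa using hε)
    simp at h1 h2 ⊢
    exact ⟨h1, h2⟩
  | insert i V hi ih =>
    have hPs : ∀ s : ℂ, 0 < s.im → ∀ w : ι → ℂ, (∀ j, 0 < (w j).im) →
        ∑ S ∈ V.powerset, (P S + s * P (insert i S)) * ∏ j ∈ S, w j ≠ 0 := by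
      intro s hs w hw
      have := hP (Function.update w i s) (fun j => by
        rcases eq_or_ne j i with rfl | hj
        · simpa using hs
        · simpa [hj] using hw j)
      rw [Finset.sum_powerset_insert hi, ← Finset.sum_add_distrib] at this
      convert this using 1
      refine Finset.sum_congr rfl fun S hS => ?_
      have hiS : i ∉ S := fun h => hi (Finset.mem_powerset.1 hS h)
      rw [Finset.prod_insert hiS, Finset.prod_update_of_notMem hiS, Function.update_self]
      ring
    have hgt : ∀ t : ℂ, -ε < t.im → ∀ W ⊆ V, ∀ z : ι → ℂ, (∀ j, -ε < (z j).im) →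
        ∑ S ∈ W.powerset, (g (insert i S) + t * g S) * ∏ j ∈ W \ S, z j ≠ 0 := by
      intro t ht W hW z hz
      have hiW : i ∉ W := fun h => hi (hW h)
      have := hg (insert i W) (Finset.insert_subset_insert i hW) (Function.update z i t) (fun j => by
        rcases eq_or_ne j i with rfl | hj
        · simpa using ht
        · simpa [hj] using hz j)
      rw [Finset.sum_powerset_insert hiW, ← Finset.sum_add_distrib] at this
      convert this using 1
      refine Finset.sum_congr rfl fun S hS => ?_
      have hiS : i ∉ S := fun h => hiW (Finset.mem_powerset.1 hS h)
      have hi' : i ∉ W \ S := fun h => hiW (Finset.mem_sdiff.1 h).1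
      rw [Finset.insert_sdiff_insert, Finset.insert_sdiff_of_notMem _ hiS,
        Finset.sdiff_insert_of_notMem hiW, Finset.prod_insert hi',
        Finset.prod_update_of_notMem hi', Function.update_self]
      ring
    have key := bilinear_pairing_ne_zero (a := ∑ S ∈ V.powerset, P S * g (insert i S))
      (b := ∑ S ∈ V.powerset, P S * g S)
      (c := ∑ S ∈ V.powerset, P (insert i S) * g (insert i S))
      (d := ∑ S ∈ V.powerset, P (insert i S) * g S) hε
      (fun t s ht hs => by
        have := ih _ _ (hPs s hs) (hgt t ht)
        convert this using 1
        simp only [Finset.mul_sum, ← Finset.sum_add_distrib]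
        exact Finset.sum_congr rfl fun S _ => by ring)
      (fun s hs => by
        have := ih _ _ (hPs s hs) (fun W hW => hg W (hW.trans (Finset.subset_insert i V)))
        convert this using 1
        simp only [Finset.mul_sum, ← Finset.sum_add_distrib]
        exact Finset.sum_congr rfl fun S _ => by ring)
    rwa [Finset.sum_powerset_insert hi]

theorem det_piecewise_single {ι R : Type*} [Fintype ι] [DecidableEq ι] [CommRing R]
    (M : ι → ι → R) (S : Finset ι) :
    Matrix.det (Matrix.of (S.piecewise M fun i => Pi.single i 1)) =
      ((Matrix.of M).submatrix (Subtype.val : {x // x ∈ S} → ι) Subtype.val).det := by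
  rw [Matrix.twoBlockTriangular_det _ (fun i => i ∈ S)]
  · have h1 : Matrix.toSquareBlockProp (Matrix.of (S.piecewise M fun i => Pi.single i 1))
        (fun i => i ∈ S) = (Matrix.of M).submatrix Subtype.val Subtype.val := by
      ext ⟨i, hi⟩ ⟨j, hj⟩
      simp [Matrix.toSquareBlockProp, hi]
    have h2 : Matrix.toSquareBlockProp (Matrix.of (S.piecewise M fun i => Pi.single i 1))
        (fun i => ¬ i ∈ S) = 1 := by
      ext ⟨i, hi⟩ ⟨j, hj⟩
      simp [Matrix.toSquareBlockProp, hi, Matrix.one_apply, Pi.single_apply, eq_comm]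
    rw [h1, h2, Matrix.det_one, mul_one]
    congr!
  · intro i hi j hj
    have : j ≠ i := fun h => hi (h ▸ hj)
    simp [hi, this]

theorem det_submatrix_add_diagonal {ι R : Type*} [Fintype ι] [DecidableEq ι] [CommRing R]
    (M : Matrix ι ι R) (z : ι → R) (V : Finset ι) :
    ((M + Matrix.diagonal z).submatrix (Subtype.val : {x // x ∈ V} → ι) Subtype.val).det =
      ∑ S ∈ V.powerset, (M.submatrix (Subtype.val : {x // x ∈ S} → ι) Subtype.val).det *
        ∏ i ∈ V \ S, z i := by
  let e : ι → ι → R := fun i => Pi.single i 1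
  let m : ι → ι → R := V.piecewise (fun i => z i • e i) e
  let f := (Matrix.detRowAlternating (n := ι) (R := R)).toMultilinearMap
  have hf : ∀ (N : ι → ι → R) (S : Finset ι), f (S.piecewise N e) =
    ((Matrix.of N).submatrix (Subtype.val : {x // x ∈ S} → ι) Subtype.val).det :=
    det_piecewise_single
  obtain ⟨N, rfl⟩ := Matrix.of.surjective M
  have hN : Matrix.of N + Matrix.diagonal z =
      Matrix.of fun i j => N i j + Matrix.diagonal z i j := rfl
  have h1 : V.piecewise (N + m) m = V.piecewise (fun i j => N i j + Matrix.diagonal z i j) e := by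
    ext i j
    by_cases hi : i ∈ V
    · simp [hi, e, m, Matrix.diagonal_apply, Pi.single_apply, eq_comm]
    · simp [hi, m]
  rw [hN, ← hf, ← h1, f.map_piecewise_add]
  refine Finset.sum_congr rfl fun S hS => ?_
  have h2 : S.piecewise N m =
      (V \ S).piecewise (fun i => z i • (S.piecewise N e) i) (S.piecewise N e) := by
    ext i j
    by_cases hi : i ∈ S
    · simp [hi]
    · by_cases hV : i ∈ V <;> simp [hi, hV, m]
  rw [h2, f.map_piecewise_smul, hf, smul_eq_mul, mul_comm]

theorem det_diagonal_sub_ne_zero {ι : Type*} [Fintype ι] [DecidableEq ι] {A : Matrix ι ι ℂ}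
    (hA : A.IsHermitian) {z : ι → ℂ} (hz : ∀ i, 0 < (z i).im) :
    (Matrix.diagonal z - A).det ≠ 0 := by
  intro h
  obtain ⟨v, hv, hv0⟩ := Matrix.exists_mulVec_eq_zero_iff.2 h
  have h1 : star v ⬝ᵥ (Matrix.diagonal z *ᵥ v) = star v ⬝ᵥ (A *ᵥ v) := by
    rw [Matrix.sub_mulVec, sub_eq_zero] at hv0
    rw [hv0]
  have h2 : (star v ⬝ᵥ (A *ᵥ v)).im = 0 := hA.im_star_dotProduct_mulVec_self v
  have h3 : (star v ⬝ᵥ (Matrix.diagonal z *ᵥ v)).im = ∑ i, (z i).im * Complex.normSq (v i) := by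
    simp only [dotProduct, Matrix.mulVec_diagonal, Complex.im_sum]
    refine Finset.sum_congr rfl fun i _ => ?_
    simp [Complex.normSq_apply]
    ring
  rw [h1, h2] at h3
  obtain ⟨i, hi⟩ := Function.ne_iff.1 hv
  have : 0 < ∑ i, (z i).im * Complex.normSq (v i) :=
    Finset.sum_pos' (fun i _ => mul_nonneg (hz i).le (Complex.normSq_nonneg _))
      ⟨i, Finset.mem_univ _, mul_pos (hz i) (Complex.normSq_pos.2 hi)⟩
  linarith

theorem sum_mul_det_submatrix_ne_zero {ι : Type*} [Fintype ι] [DecidableEq ι] {A : Matrix ι ι ℂ}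
    (hA : A.IsHermitian) {x : ℂ} (hx : 0 < x.im) (P : Finset ι → ℂ)
    (hP : ∀ w : ι → ℂ, (∀ i, 0 < (w i).im) → ∑ S, P S * ∏ i ∈ S, w i ≠ 0) :
    ∑ S : Finset ι, P S *
      ((Matrix.diagonal (fun _ => x) - A).submatrix
        (Subtype.val : {i // i ∈ S} → ι) Subtype.val).det ≠ 0 := by
  rw [← Finset.powerset_univ]
  refine sum_powerset_mul_ne_zero hx Finset.univ P _ (by simpa using hP) fun V _ z hz => ?_
  rw [← det_submatrix_add_diagonal]
  have : (Matrix.diagonal (fun _ => x) - A + Matrix.diagonal z).submatrix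
      (Subtype.val : {i // i ∈ V} → ι) Subtype.val =
      Matrix.diagonal (fun i : {i // i ∈ V} => x + z i) -
        A.submatrix Subtype.val Subtype.val := by
    ext i j
    simp only [Matrix.submatrix_apply, Matrix.add_apply, Matrix.sub_apply, Matrix.diagonal_apply,
      Subtype.ext_iff]
    split_ifs <;> ring
  rw [this]
  refine det_diagonal_sub_ne_zero (hA.submatrix _) fun i => ?_
  have := hz i
  rw [Complex.add_im]
  linarith

end Pairing

section Interlacing

open Polynomial Filter Topology

theorem aeval_ofReal_eq (f : ℝ[X]) (x : ℝ) : aeval (x : ℂ) f = ((f.eval x : ℝ) : ℂ) := by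
  rw [← Complex.coe_algebraMap, aeval_algebraMap_apply, coe_aeval_eq_eval]

theorem eq_zero_of_eventually_aeval_eq_zero {f : ℝ[X]} {z : ℂ}
    (h : ∀ᶠ w in 𝓝 z, aeval w f = 0) : f = 0 := by
  have h1 : (f.map (algebraMap ℝ ℂ)) = 0 := by
    refine eq_zero_of_infinite_isRoot _ (infinite_of_mem_nhds z ?_)
    filter_upwards [h] with w hw
    change (f.map (algebraMap ℝ ℂ)).IsRoot w
    rw [IsRoot.def, eval_map_algebraMap, hw]
  exact (Polynomial.map_eq_zero _).1 h1

/-- The local open mapping property of the quotient `-f / g` of two real polynomials, along the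
ray of reals starting at its value. -/
theorem exists_mem_neg_div_eq_add {f g : ℝ[X]} {z : ℂ} {m : ℝ} (hg : aeval z g ≠ 0)
    (hz : aeval z f + m * aeval z g = 0) (hfg : f + C m * g ≠ 0) {s : Set ℂ} (hs : s ∈ 𝓝 z) :
    ∃ w ∈ s, ∃ t : ℝ, 0 < t ∧ aeval w g ≠ 0 ∧ aeval w f + ((m + t : ℝ) : ℂ) * aeval w g = 0 := by
  have hev : ∀ᶠ w in 𝓝 z, aeval w g ≠ 0 := (g.continuous_aeval.continuousAt).eventually_ne hg
  have han : AnalyticAt ℂ (fun w : ℂ => -aeval w f / aeval w g) z := by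
    refine AnalyticAt.div ?_ ?_ hg
    · exact (AnalyticAt.aeval_polynomial analyticAt_id f).neg
    · exact AnalyticAt.aeval_polynomial analyticAt_id g
  have hval : -aeval z f / aeval z g = (m : ℂ) := by
    rw [div_eq_iff hg]; linear_combination -hz
  rcases han.eventually_constant_or_nhds_le_map_nhds with hc | ho
  · refine absurd (eq_zero_of_eventually_aeval_eq_zero (z := z) ?_) hfg
    filter_upwards [hc, hev] with w hw hgw
    rw [hval, div_eq_iff hgw] at hw
    simp only [map_add, map_mul, aeval_C, Complex.coe_algebraMap]
    linear_combination -hw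
  · rw [hval] at ho
    have hmem := ho (image_mem_map (inter_mem hs hev))
    have hcont : Tendsto (fun t : ℝ => ((m + t : ℝ) : ℂ)) (𝓝[>] 0) (𝓝 (m : ℂ)) := by
      have : Continuous fun t : ℝ => ((m + t : ℝ) : ℂ) := by fun_prop
      simpa using (this.tendsto 0).mono_left nhdsWithin_le_nhds
    obtain ⟨t, ⟨w, ⟨hws, hgw⟩, hw⟩, ht⟩ :=
      ((hcont.eventually hmem).and self_mem_nhdsWithin).exists
    refine ⟨w, hws, t, ht, hgw, ?_⟩
    simp only at hw
    rw [div_eq_iff hgw] at hw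
    linear_combination -hw

theorem realRooted_or_zero_of_forall_pos {f g : ℝ[X]}
    (h : ∀ s : ℝ, 0 < s → f + C s * g = 0 ∨ ∀ z : ℂ, z.im ≠ 0 → aeval z (f + C s * g) ≠ 0) :
    f = 0 ∨ ∀ z : ℂ, z.im ≠ 0 → aeval z f ≠ 0 := by
  by_contra! hcon
  obtain ⟨hf, z, hz, hfz⟩ := hcon
  have hgz : aeval z g ≠ 0 := by
    intro hgz
    rcases h 1 one_pos with h1 | h1
    · rcases h 2 two_pos with h2 | h2
      · apply hf
        have := congrArg₂ (fun a b => C 2 * a - b) h1 h2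
        simp only [C_1] at this
        have e : C (2 : ℝ) = 1 + 1 := by rw [← C_1, ← C_add]; norm_num
        rw [e] at this
        linear_combination this
      · exact h2 z hz (by simp [hfz, hgz])
    · exact h1 z hz (by simp [hfz, hgz])
  have hopen : {w : ℂ | w.im ≠ 0} ∈ 𝓝 z :=
    Complex.continuous_im.continuousAt.eventually_ne hz
  obtain ⟨w, hw, t, ht, hgw, hfw⟩ := exists_mem_neg_div_eq_add (f := f) (m := 0) hgz
    (by simp [hfz]) (by simpa using hf) hopen
  rw [zero_add] at hfw
  rcases h t ht with h0 | h0
  · have : aeval z (f + C t * g) = 0 := by rw [h0, map_zero]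
    simp [hfz, hgz, ht.ne'] at this
  · exact h0 w hw (by simpa using hfw)

theorem eval_pos_of_forall_ne_zero {f : ℝ[X]} (hf : ∀ᶠ x in atTop, 0 < f.eval x) {a : ℝ}
    (h : ∀ x, a < x → f.eval x ≠ 0) {x : ℝ} (hx : a < x) : 0 < f.eval x := by
  by_contra! hneg
  obtain ⟨y, hy, hxy⟩ := (hf.and (eventually_ge_atTop x)).exists
  obtain ⟨c, hc, hc0⟩ := intermediate_value_Icc hxy f.continuous.continuousOn ⟨hneg, hy.le⟩
  exact h c (hx.trans_le hc.1) hc0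

theorem not_realRooted_of_largest_roots {f g : ℝ[X]} {α β : ℝ} (hαβ : α < β)
    (hfpos : ∀ x, α < x → 0 < f.eval x) (hgβ : g.eval β = 0)
    (hgpos : ∀ x, β < x → 0 < g.eval x) (hgα : 0 < g.eval α)
    (h : ∀ t : ℝ, 0 < t → ∀ z : ℂ, z.im ≠ 0 → aeval z (g + C t * f) ≠ 0) : False := by
  have hev : ∀ᶠ x in 𝓝[>] α, 0 < g.eval x :=
    (g.continuous.continuousAt.eventually (lt_mem_nhds hgα)).filter_mono nhdsWithin_le_nhds
  obtain ⟨a, hga, ha⟩ := (hev.and (Ioo_mem_nhdsGT hαβ)).exists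
  have hfa := hfpos a ha.1
  set r : ℝ → ℝ := fun x => -g.eval x / f.eval x with hr
  have hcont : ContinuousOn r (Set.Icc a (β + 1)) := by
    refine ContinuousOn.div (by fun_prop) (by fun_prop) fun x hx => ?_
    exact (hfpos x (ha.1.trans_le hx.1)).ne'
  have hβmem : β ∈ Set.Icc a (β + 1) := ⟨ha.2.le, by linarith⟩
  obtain ⟨y, hy, hmax⟩ := isCompact_Icc.exists_isMaxOn ⟨β, hβmem⟩ hcont
  have hfy := hfpos y (ha.1.trans_le hy.1)
  have hm : 0 ≤ r y := by
    have : r β ≤ r y := hmax hβmem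
    simpa [hr, hgβ] using this
  have hy1 : a < y := by
    refine lt_of_le_of_ne hy.1 ?_
    rintro rfl
    exact absurd hm (not_le.2 (div_neg_of_neg_of_pos (by linarith) hfy))
  have hy2 : y < β + 1 := by
    refine lt_of_le_of_ne hy.2 ?_
    rintro rfl
    have := hgpos (β + 1) (by linarith)
    exact absurd hm (not_le.2 (div_neg_of_neg_of_pos (by linarith) hfy))
  have hs : {z : ℂ | a < z.re ∧ z.re < β + 1} ∈ 𝓝 (y : ℂ) := by
    refine IsOpen.mem_nhds ?_ ⟨by simpa using hy1, by simpa using hy2⟩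
    exact (isOpen_lt continuous_const Complex.continuous_re).inter
      (isOpen_lt Complex.continuous_re continuous_const)
  obtain ⟨w, ⟨hw1, hw2⟩, t, ht, hfw, hw⟩ := exists_mem_neg_div_eq_add (f := g) (g := f)
    (z := (y : ℂ)) (m := r y)
    (by rw [aeval_ofReal_eq]; exact_mod_cast hfy.ne')
    (by
      rw [aeval_ofReal_eq, aeval_ofReal_eq, hr]
      norm_cast
      field_simp
      ring)
    (by
      intro h0
      have := congrArg (eval a) h0
      simp only [eval_add, eval_mul, eval_C, eval_zero] at this
      have := mul_nonneg hm hfa.le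
      linarith) hs
  have hpos : 0 < r y + t := by linarith
  rcases eq_or_ne w.im 0 with h0 | h0
  · obtain ⟨x, rfl⟩ : ∃ x : ℝ, w = x := ⟨w.re, by apply Complex.ext <;> simp [h0]⟩
    rw [Complex.ofReal_re] at hw1 hw2
    have hfx := hfpos x (ha.1.trans hw1)
    rw [aeval_ofReal_eq, aeval_ofReal_eq] at hw
    norm_cast at hw
    have hrx : r x = r y + t := by
      rw [hr]; simp only
      rw [div_eq_iff hfx.ne']
      linarith
    have : r x ≤ r y := hmax ⟨hw1.le, hw2.le⟩
    linarith
  · exact h _ hpos w h0 (by simpa using hw)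

theorem exists_largest_root {f : ℝ[X]} (hf0 : f ≠ 0) {a x : ℝ} (hx : a < x) (hfx : f.eval x = 0) :
    ∃ α, a < α ∧ f.eval α = 0 ∧ ∀ y, α < y → f.eval y ≠ 0 := by
  obtain ⟨α, hα, hmax⟩ := f.roots.toFinset.exists_max_image id
    ⟨x, by simp [hf0, hfx]⟩
  have hα' : f.eval α = 0 := by simpa [hf0] using hα
  refine ⟨α, hx.trans_le (hmax x (by simp [hf0, hfx])), hα', fun y hy hfy => ?_⟩
  exact absurd (hmax y (by simp [hf0, hfy])) (not_le.2 hy)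

theorem ne_zero_of_eventually_eval_pos {f : ℝ[X]} (hf : ∀ᶠ x in atTop, 0 < f.eval x) : f ≠ 0 := by
  rintro rfl
  obtain ⟨x, hx⟩ := hf.exists
  simp at hx

theorem forall_eval_ne_zero_or_of_add {f g : ℝ[X]} (hf : ∀ᶠ x in atTop, 0 < f.eval x)
    (hg : ∀ᶠ x in atTop, 0 < g.eval x)
    (h : ∀ s t : ℝ, 0 < s → 0 < t → ∀ z : ℂ, z.im ≠ 0 → aeval z (C s * f + C t * g) ≠ 0) {a : ℝ}
    (ha : ∀ x, a < x → (f + g).eval x ≠ 0) :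
    (∀ x, a < x → f.eval x ≠ 0) ∨ (∀ x, a < x → g.eval x ≠ 0) := by
  by_contra! hcon
  obtain ⟨⟨x, hx, hfx⟩, y, hy, hgy⟩ := hcon
  obtain ⟨α, hα, hfα, hα'⟩ := exists_largest_root (ne_zero_of_eventually_eval_pos hf) hx hfx
  obtain ⟨β, hβ, hgβ, hβ'⟩ := exists_largest_root (ne_zero_of_eventually_eval_pos hg) hy hgy
  have hfg : ∀ x, a < x → 0 < f.eval x + g.eval x := fun x hx => by
    rw [← eval_add]
    refine eval_pos_of_forall_ne_zero ?_ ha hx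
    filter_upwards [hf, hg] with x h1 h2
    rw [eval_add]; linarith
  have h1 := hfg α hα
  have h2 := hfg β hβ
  rcases lt_trichotomy α β with hlt | rfl | hlt
  · refine not_realRooted_of_largest_roots hlt (fun x => eval_pos_of_forall_ne_zero hf hα') hgβ
      (fun x => eval_pos_of_forall_ne_zero hg hβ') (by linarith) fun t ht z hz => ?_
    simpa [add_comm] using h t 1 ht one_pos z hz
  · linarith
  · refine not_realRooted_of_largest_roots hlt (fun x => eval_pos_of_forall_ne_zero hg hβ') hfα
      (fun x => eval_pos_of_forall_ne_zero hf hα') (by linarith) fun t ht z hz => ?_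
    simpa using h 1 t one_pos ht z hz

theorem sum_eq_zero_or_eventually_eval_pos {κ : Type*} (s : Finset κ) (F : κ → ℝ[X])
    (hF : ∀ k ∈ s, F k = 0 ∨ ∀ᶠ x in atTop, 0 < (F k).eval x) :
    ∑ k ∈ s, F k = 0 ∨ ∀ᶠ x in atTop, 0 < (∑ k ∈ s, F k).eval x := by
  refine Finset.sum_induction F (fun p => p = 0 ∨ ∀ᶠ x in atTop, 0 < p.eval x) ?_ (Or.inl rfl) hF
  rintro p q (rfl | hp) (rfl | hq)
  · simp
  · right; simpa using hq
  · right; simpa using hp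
  · right
    filter_upwards [hp, hq] with x h1 h2
    rw [eval_add]; linarith

theorem exists_summand_forall_eval_ne_zero {ι : Type*} [DecidableEq ι] (U : Finset ι)
    (F : Finset ι → ℝ[X]) (hF : ∀ S, F S = 0 ∨ ∀ᶠ x in atTop, 0 < (F S).eval x)
    (hR : ∀ w : ι → ℝ, (∀ i, 0 < w i) → ∑ S ∈ U.powerset, C (∏ i ∈ S, w i) * F S = 0 ∨
      ∀ z : ℂ, z.im ≠ 0 → aeval z (∑ S ∈ U.powerset, C (∏ i ∈ S, w i) * F S) ≠ 0)
    (hne : ∑ S ∈ U.powerset, F S ≠ 0) {a : ℝ}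
    (ha : ∀ x, a < x → (∑ S ∈ U.powerset, F S).eval x ≠ 0) :
    ∃ S, F S ≠ 0 ∧ ∀ x, a < x → (F S).eval x ≠ 0 := by
  induction U using Finset.induction_on generalizing F with
  | empty => exact ⟨∅, by simpa using hne, by simpa using ha⟩
  | insert i V hi ih =>
    set f : (ι → ℝ) → ℝ[X] := fun w => ∑ S ∈ V.powerset, C (∏ j ∈ S, w j) * F S with hf
    set g : (ι → ℝ) → ℝ[X] :=
      fun w => ∑ S ∈ V.powerset, C (∏ j ∈ S, w j) * F (insert i S) with hg
    have hfg : ∀ w : ι → ℝ, (∀ j, 0 < w j) → ∀ s t : ℝ, 0 < s → 0 < t →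
        C s * f w + C t * g w = 0 ∨
          ∀ z : ℂ, z.im ≠ 0 → aeval z (C s * f w + C t * g w) ≠ 0 := by
      intro w hw s t hs ht
      have := hR (Function.update w i (t / s)) (fun j => by
        rcases eq_or_ne j i with rfl | hj
        · simpa using div_pos ht hs
        · simpa [hj] using hw j)
      have e : ∑ S ∈ (insert i V).powerset,
          C (∏ j ∈ S, Function.update w i (t / s) j) * F S = f w + C (t / s) * g w := by
        rw [Finset.sum_powerset_insert hi, hf, hg, Finset.mul_sum]
        congr 1 <;> refine Finset.sum_congr rfl fun S hS => ?_
        all_goals have hiS : i ∉ S := fun h => hi (Finset.mem_powerset.1 hS h)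
        · rw [Finset.prod_update_of_notMem hiS]
        · rw [Finset.prod_insert hiS, Finset.prod_update_of_notMem hiS, Function.update_self,
            C_mul, mul_assoc]
      have e' : C s * f w + C t * g w = C s * (f w + C (t / s) * g w) := by
        rw [mul_add, ← mul_assoc, ← C_mul, mul_div_cancel₀ _ hs.ne']
      rw [e] at this
      rw [e']
      rcases this with h | h
      · left; rw [h, mul_zero]
      · right
        intro z hz
        rw [map_mul, aeval_C]
        exact mul_ne_zero (by simpa using hs.ne') (h z hz)
    have hfR : ∀ w : ι → ℝ, (∀ j, 0 < w j) → f w = 0 ∨ ∀ z : ℂ, z.im ≠ 0 → aeval z (f w) ≠ 0 :=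
      fun w hw => realRooted_or_zero_of_forall_pos (g := g w) fun s hs => by
        simpa using hfg w hw 1 s one_pos hs
    have hgR : ∀ w : ι → ℝ, (∀ j, 0 < w j) → g w = 0 ∨ ∀ z : ℂ, z.im ≠ 0 → aeval z (g w) ≠ 0 :=
      fun w hw => realRooted_or_zero_of_forall_pos (g := f w) fun s hs => by
        simpa [add_comm] using hfg w hw s 1 hs one_pos
    have ihf := ih F hF hfR
    have ihg := ih (fun S => F (insert i S)) (fun S => hF _) hgR
    have hfg1 := hfg (fun _ => 1) (by simp)
    simp only [hf, hg, Finset.prod_const_one, C_1, one_mul] at hfg1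
    rw [Finset.sum_powerset_insert hi] at hne ha
    have hf1 := sum_eq_zero_or_eventually_eval_pos V.powerset F fun S _ => hF S
    have hg1 := sum_eq_zero_or_eventually_eval_pos V.powerset (fun S => F (insert i S))
      fun S _ => hF _
    rcases hf1 with hf1 | hf1
    · rw [hf1, zero_add] at hne ha
      obtain ⟨S, hS⟩ := ihg hne ha
      exact ⟨_, hS⟩
    · rcases hg1 with hg1 | hg1
      · rw [hg1, add_zero] at hne ha
        exact ihf hne ha
      · have hcomb : ∀ s t : ℝ, 0 < s → 0 < t → ∀ z : ℂ, z.im ≠ 0 →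
            aeval z (C s * ∑ S ∈ V.powerset, F S +
              C t * ∑ S ∈ V.powerset, F (insert i S)) ≠ 0 := by
          intro s t hs ht
          refine (hfg1 s t hs ht).resolve_left (ne_zero_of_eventually_eval_pos ?_)
          filter_upwards [hf1, hg1] with x h1 h2
          simp only [eval_add, eval_mul, eval_C]
          positivity
        rcases forall_eval_ne_zero_or_of_add hf1 hg1 hcomb ha with h | h
        · exact ihf (ne_zero_of_eventually_eval_pos hf1) h
        · obtain ⟨S, hS⟩ := ihg (ne_zero_of_eventually_eval_pos hg1) h
          exact ⟨_, hS⟩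

end Interlacing

section DifferentialOperators

open MvPolynomial

theorem diffOp_sum_monomial {σ κ R : Type*} [Fintype σ] [CommSemiring R] (s : Finset κ)
    (e : κ → σ →₀ ℕ) (c : κ → R) (p : MvPolynomial σ R) :
    diffOp (∑ k ∈ s, monomial (e k) (c k)) p = ∑ k ∈ s, c k • applyMon (e k) p := by
  classical
  have hsub : (∑ k ∈ s, monomial (e k) (c k)).support ⊆ s.image e := by
    intro m hm
    by_contra hcon
    rw [mem_support_iff, coeff_sum] at hm
    refine hm (Finset.sum_eq_zero fun k hk => ?_)
    rw [coeff_monomial, if_neg]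
    exact fun h => hcon (h ▸ Finset.mem_image_of_mem e hk)
  rw [diffOp, Finset.sum_subset hsub fun m _ hm => by
    rw [notMem_support_iff.1 hm, zero_smul]]
  simp only [coeff_sum, coeff_monomial, Finset.sum_smul, ite_smul, zero_smul]
  rw [Finset.sum_comm]
  refine Finset.sum_congr rfl fun k hk => ?_
  rw [Finset.sum_ite_eq, if_pos (Finset.mem_image_of_mem e hk)]

theorem pderiv_det_submatrix_add_diagonal {ι R : Type*} [Fintype ι] [DecidableEq ι] [CommRing R]
    (M : Matrix ι ι R) {V : Finset ι} {i : ι} (hi : i ∉ V) :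
    pderiv i ((M.map C + Matrix.diagonal X : Matrix ι ι (MvPolynomial ι R)).submatrix
        (Subtype.val : {x // x ∈ insert i V} → ι) Subtype.val).det =
      ((M.map C + Matrix.diagonal X : Matrix ι ι (MvPolynomial ι R)).submatrix
        (Subtype.val : {x // x ∈ V} → ι) Subtype.val).det := by
  have hC : ∀ S : Finset ι, ((M.map C : Matrix ι ι (MvPolynomial ι R)).submatrix
      (Subtype.val : {x // x ∈ S} → ι) Subtype.val).det =
      C (M.submatrix (Subtype.val : {x // x ∈ S} → ι) Subtype.val).det := fun S => by
    rw [RingHom.map_det]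
    rfl
  have hprod : ∀ S : Finset ι, pderiv i (∏ j ∈ V \ S, (X j : MvPolynomial ι R)) = 0 := fun S => by
    refine Finset.prod_induction _ (fun p => pderiv i p = 0) ?_ pderiv_one fun j hj => ?_
    · intro p q hp hq
      rw [pderiv_mul, hp, hq, zero_mul, mul_zero, add_zero]
    · exact pderiv_X_of_ne fun h => hi (h ▸ (Finset.mem_sdiff.1 hj).1)
  rw [det_submatrix_add_diagonal, det_submatrix_add_diagonal, Finset.sum_powerset_insert hi,
    map_add, map_sum, map_sum, ← Finset.sum_add_distrib]
  refine Finset.sum_congr rfl fun S hS => ?_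
  have hiS : i ∉ S := fun h => hi (Finset.mem_powerset.1 hS h)
  have hi' : i ∉ V \ S := fun h => hi (Finset.mem_sdiff.1 h).1
  rw [Finset.insert_sdiff_insert, Finset.insert_sdiff_of_notMem _ hiS,
    Finset.sdiff_insert_of_notMem hi, Finset.prod_insert hi', hC, hC, pderiv_C_mul, pderiv_C_mul,
    hprod, pderiv_mul, pderiv_X_self, hprod]
  ring

theorem applyMon_indicator_compl_det {ι R : Type*} [Fintype ι] [DecidableEq ι] [CommRing R]
    (M : Matrix ι ι R) (S : Finset ι) :
    applyMon (Finsupp.indicator Sᶜ fun _ _ => 1)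
        (M.map C + Matrix.diagonal X : Matrix ι ι (MvPolynomial ι R)).det =
      ((M.map C + Matrix.diagonal X : Matrix ι ι (MvPolynomial ι R)).submatrix
        (Subtype.val : {x // x ∈ S} → ι) Subtype.val).det := by
  let G : Finset ι → MvPolynomial ι R := fun V =>
    ((M.map C + Matrix.diagonal X : Matrix ι ι (MvPolynomial ι R)).submatrix
      (Subtype.val : {x // x ∈ V} → ι) Subtype.val).det
  have huniv : (M.map C + Matrix.diagonal X : Matrix ι ι (MvPolynomial ι R)).det =
      G Finset.univ :=
    (Matrix.det_submatrix_equiv_self (Equiv.subtypeUnivEquiv Finset.mem_univ) _).symm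
  have key : ∀ l : List ι, l.Nodup →
      l.foldr (fun i g => (fun h => pderiv i h)^[Finsupp.indicator Sᶜ (fun _ _ => 1) i] g)
        (G Finset.univ) = G (S ∪ l.toFinsetᶜ) := by
    intro l
    induction l with
    | nil =>
      intro _
      rw [List.foldr_nil, List.toFinset_nil, Finset.compl_empty,
        Finset.union_eq_right.2 (Finset.subset_univ S)]
    | cons i l ih =>
      intro hl
      rw [List.nodup_cons] at hl
      rw [List.foldr_cons, ih hl.2]
      by_cases hi : i ∈ S
      · have : S ∪ (i :: l).toFinsetᶜ = S ∪ l.toFinsetᶜ := by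
          ext j
          by_cases hj : j = i <;> simp [hj, hi]
        have hzero : Finsupp.indicator Sᶜ (fun _ _ => 1) i = 0 := by simp [Finsupp.indicator, hi]
        rw [hzero, Function.iterate_zero, id_eq, this]
      · have hins : S ∪ l.toFinsetᶜ = insert i (S ∪ (i :: l).toFinsetᶜ) := by
          ext j
          by_cases hj : j = i <;> simp [hj, hl.1]
        have hnot : i ∉ S ∪ (i :: l).toFinsetᶜ := by simp [hi]
        have hone : Finsupp.indicator Sᶜ (fun _ _ => 1) i = 1 := by simp [Finsupp.indicator, hi]
        rw [hone, Function.iterate_one, hins]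
        exact pderiv_det_submatrix_add_diagonal M hnot
  rw [huniv, applyMon, key _ (Finset.nodup_toList _), Finset.toList_toFinset, Finset.compl_univ,
    Finset.union_empty]

theorem diffOp_flipGenPolyC_detZSub {n : ℕ} (μ : Finset (Fin n) → ℝ)
    (A : Matrix (Fin n) (Fin n) ℂ) (x : ℂ) :
    eval (fun _ => x) (diffOp (flipGenPolyC μ) (detZSub A)) =
      ∑ S : Finset (Fin n), (μ S : ℂ) * ((Matrix.diagonal (fun _ => x) - A).submatrix
        (Subtype.val : {i // i ∈ S} → Fin n) Subtype.val).det := by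
  have hflip : flipGenPolyC μ = ∑ S : Finset (Fin n),
      monomial (Finsupp.indicator Sᶜ fun _ _ => 1) ((μ S : ℝ) : ℂ) := by
    refine Finset.sum_congr rfl fun S _ => ?_
    have := prod_X_pow (R := ℂ) (fun _ => 1) Sᶜ
    simp only [pow_one] at this
    rw [this, C_mul_monomial, mul_one]
  have hdet : detZSub A = ((-A).map C + Matrix.diagonal X).det := by
    rw [detZSub, sub_eq_neg_add, Matrix.map_neg _ (map_neg C)]
  rw [hflip, diffOp_sum_monomial, map_sum, hdet]
  refine Finset.sum_congr rfl fun S _ => ?_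
  rw [applyMon_indicator_compl_det, smul_eval, RingHom.map_det]
  congr 2
  ext i j
  by_cases h : (i : Fin n) = j <;> simp [h]; ring

end DifferentialOperators

section ExpectedCharpoly

open Polynomial Filter

theorem eval_expCharPoly {n : ℕ} (μ : Finset (Fin n) → ℝ) (A : Matrix (Fin n) (Fin n) ℂ) (x : ℂ) :
    eval x (expCharPoly μ A) =
      ∑ S : Finset (Fin n), (μ S : ℂ) * ((Matrix.diagonal (fun _ => x) - A).submatrix
        (Subtype.val : {i // i ∈ S} → Fin n) Subtype.val).det := by
  rw [expCharPoly, eval_finsetSum]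
  refine Finset.sum_congr rfl fun S _ => ?_
  rw [eval_mul, eval_C, Matrix.eval_charpoly]
  congr 2
  ext i j
  by_cases h : i = j
  · simp [subMat, h]
  · have h' : (i : Fin n) ≠ j := fun e => h (Subtype.ext e)
    simp [subMat, h, h']

theorem subMat_isHermitian {n : ℕ} {A : Matrix (Fin n) (Fin n) ℂ} (hA : A.IsHermitian)
    (S : Finset (Fin n)) : (subMat A S).IsHermitian :=
  hA.submatrix _

/-- The characteristic polynomial of a hermitian matrix, with real coefficients. -/
noncomputable def Matrix.IsHermitian.realCharpoly {ι : Type*} [Fintype ι] [DecidableEq ι]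
    {A : Matrix ι ι ℂ} (hA : A.IsHermitian) : ℝ[X] :=
  ∏ i, (X - C (hA.eigenvalues i))

theorem Matrix.IsHermitian.map_realCharpoly {ι : Type*} [Fintype ι] [DecidableEq ι]
    {A : Matrix ι ι ℂ} (hA : A.IsHermitian) :
    hA.realCharpoly.map (algebraMap ℝ ℂ) = A.charpoly := by
  rw [hA.charpoly_eq, Matrix.IsHermitian.realCharpoly, Polynomial.map_prod]
  simp

theorem Matrix.IsHermitian.eventually_eval_realCharpoly_pos {ι : Type*} [Fintype ι]
    [DecidableEq ι] {A : Matrix ι ι ℂ} (hA : A.IsHermitian) :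
    ∀ᶠ x in atTop, 0 < hA.realCharpoly.eval x := by
  have : ∀ᶠ x in atTop, ∀ i, hA.eigenvalues i < x :=
    eventually_all.2 fun i => eventually_gt_atTop _
  filter_upwards [this] with x hx
  rw [Matrix.IsHermitian.realCharpoly, eval_prod]
  exact Finset.prod_pos fun i _ => by simpa using hx i

/-- The expected characteristic polynomial of a hermitian matrix, with real coefficients. -/
noncomputable def realExpCharPoly {n : ℕ} (μ : Finset (Fin n) → ℝ) {A : Matrix (Fin n) (Fin n) ℂ}
    (hA : A.IsHermitian) : ℝ[X] :=
  ∑ S : Finset (Fin n), C (μ S) *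
    (subMat_isHermitian hA S).realCharpoly

theorem map_realExpCharPoly {n : ℕ} (μ : Finset (Fin n) → ℝ) {A : Matrix (Fin n) (Fin n) ℂ}
    (hA : A.IsHermitian) : (realExpCharPoly μ hA).map (algebraMap ℝ ℂ) = expCharPoly μ A := by
  rw [realExpCharPoly, expCharPoly, Polynomial.map_sum]
  refine Finset.sum_congr rfl fun S _ => ?_
  rw [Polynomial.map_mul, Matrix.IsHermitian.map_realCharpoly, map_C, Complex.coe_algebraMap]

theorem aeval_genPoly {n : ℕ} (μ : Finset (Fin n) → ℝ) (z : Fin n → ℂ) :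
    MvPolynomial.aeval z (genPoly μ) = ∑ S : Finset (Fin n), (μ S : ℂ) * ∏ i ∈ S, z i := by
  simp [genPoly, map_sum, map_mul, map_prod]

theorem RealStable.weighted {n : ℕ} {μ : Finset (Fin n) → ℝ} (h : RealStable (genPoly μ))
    {w : Fin n → ℝ} (hw : ∀ i, 0 < w i) :
    RealStable (genPoly fun S => (∏ i ∈ S, w i) * μ S) := by
  intro z hz
  have := h (fun i => w i * z i) fun i => by simpa using mul_pos (hw i) (hz i)
  rw [aeval_genPoly] at this ⊢
  convert this using 2 with S
  rw [Finset.prod_mul_distrib]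
  push_cast
  ring

theorem aeval_realExpCharPoly_ne_zero {n : ℕ} {μ : Finset (Fin n) → ℝ}
    (h : RealStable (genPoly μ)) {A : Matrix (Fin n) (Fin n) ℂ} (hA : A.IsHermitian) {z : ℂ}
    (hz : z.im ≠ 0) : aeval z (realExpCharPoly μ hA) ≠ 0 := by
  have hpos : ∀ z : ℂ, 0 < z.im → aeval z (realExpCharPoly μ hA) ≠ 0 := fun z hz => by
    rw [← eval_map_algebraMap, map_realExpCharPoly, eval_expCharPoly]
    refine sum_mul_det_submatrix_ne_zero hA hz _ fun w hw => ?_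
    rw [← aeval_genPoly]
    exact h w hw
  rcases hz.lt_or_gt with hz | hz
  · intro h0
    refine hpos (starRingEnd ℂ z) (by simpa using hz) ?_
    rw [aeval_conj, h0, map_zero]
  · exact hpos z hz

end ExpectedCharpoly

/-- Sampling from a Strongly Rayleigh measure: the expected characteristic polynomial
is real rooted, some set in the support has all eigenvalues of `A(S)` at most its
largest root, and it is given by the formula
`E_μ χ[A(S)] = [P̄_μ(∂₁,…,∂ₙ) det(Z−A)]|_{z₁=⋯=zₙ=x}`. -/
theorem strongly_rayleigh_expected_charpoly {n : ℕ} (μ : Finset (Fin n) → ℝ)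
    (hμ0 : ∀ S, 0 ≤ μ S) (hμ1 : ∑ S : Finset (Fin n), μ S = 1)
    (hμe : μ ∅ = 0) (hSR : RealStable (genPoly μ))
    (A : Matrix (Fin n) (Fin n) ℂ) (hA : A.IsHermitian) :
    (∀ z : ℂ, (expCharPoly μ A).IsRoot z → z.im = 0) ∧
      (∃ S : Finset (Fin n), 0 < μ S ∧
        ∀ z : ℂ, ((subMat A S).charpoly).IsRoot z →
          z.re ≤ sSup {x : ℝ | Polynomial.eval (x : ℂ) (expCharPoly μ A) = 0}) ∧
      (∀ x : ℂ, Polynomial.eval x (expCharPoly μ A) =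
        MvPolynomial.eval (fun _ => x) (diffOp (flipGenPolyC μ) (detZSub A))) := by
  have hroot : ∀ z : ℂ, (expCharPoly μ A).IsRoot z → z.im = 0 := fun z hz => by
    by_contra hne
    refine aeval_realExpCharPoly_ne_zero hSR hA hne ?_
    rwa [← Polynomial.eval_map_algebraMap, map_realExpCharPoly]
  refine ⟨hroot, ?_, fun x => by rw [eval_expCharPoly, diffOp_flipGenPolyC_detZSub]⟩
  set F : Finset (Fin n) → Polynomial ℝ := fun S => Polynomial.C (μ S) *
    (subMat_isHermitian hA S).realCharpoly with hF
  have hFpos : ∀ S, 0 < μ S → ∀ᶠ x in Filter.atTop, 0 < (F S).eval x := fun S hS => by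
    filter_upwards [(subMat_isHermitian hA S).eventually_eval_realCharpoly_pos] with x hx
    rw [hF, Polynomial.eval_mul, Polynomial.eval_C]
    exact mul_pos hS hx
  have hFor : ∀ S, F S = 0 ∨ ∀ᶠ x in Filter.atTop, 0 < (F S).eval x := fun S => by
    rcases (hμ0 S).eq_or_lt with h | h
    · left; simp [hF, ← h]
    · exact Or.inr (hFpos S h)
  have hsum : ∑ S ∈ Finset.univ.powerset, F S = realExpCharPoly μ hA := by
    rw [Finset.powerset_univ]; rfl
  have hne : realExpCharPoly μ hA ≠ 0 := fun h0 =>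
    aeval_realExpCharPoly_ne_zero hSR hA (z := Complex.I) (by simp) (by rw [h0, map_zero])
  have heval : ∀ x : ℝ, Polynomial.eval (x : ℂ) (expCharPoly μ A) =
      (((realExpCharPoly μ hA).eval x : ℝ) : ℂ) := fun x => by
    rw [← map_realExpCharPoly μ hA, Polynomial.eval_map_algebraMap, aeval_ofReal_eq]
  have hset : {x : ℝ | Polynomial.eval (x : ℂ) (expCharPoly μ A) = 0} =
      {x : ℝ | (realExpCharPoly μ hA).IsRoot x} := by
    ext x
    change _ = _ ↔ _ = _
    rw [heval, Complex.ofReal_eq_zero]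
  have hbdd : BddAbove {x : ℝ | (realExpCharPoly μ hA).IsRoot x} :=
    (Polynomial.finite_setOfPred_isRoot hne).bddAbove
  rw [hset]
  obtain ⟨S, hS0, hS⟩ := exists_summand_forall_eval_ne_zero Finset.univ F hFor
    (fun w hw => by
      right
      intro z hz
      convert aeval_realExpCharPoly_ne_zero (hSR.weighted hw) hA hz using 2
      rw [Finset.powerset_univ, realExpCharPoly]
      refine Finset.sum_congr rfl fun S _ => ?_
      rw [hF, Polynomial.C_mul, mul_assoc])
    (by rwa [hsum]) (a := sSup {x : ℝ | (realExpCharPoly μ hA).IsRoot x})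
    (fun x hx h0 => absurd (le_csSup hbdd (by rwa [hsum] at h0)) (not_le.2 hx))
  have hμS : 0 < μ S := (hμ0 S).lt_of_ne fun h => hS0 (by simp [hF, ← h])
  refine ⟨S, hμS, fun z hz => ?_⟩
  rw [(subMat_isHermitian hA S).charpoly_eq,
    Polynomial.IsRoot.def, Polynomial.eval_prod, Finset.prod_eq_zero_iff] at hz
  obtain ⟨i, -, hi⟩ := hz
  rw [Polynomial.eval_sub, Polynomial.eval_X, Polynomial.eval_C, sub_eq_zero] at hi
  rw [hi]
  by_contra! hlt
  refine hS _ hlt ?_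
  rw [hF, Polynomial.eval_mul, Matrix.IsHermitian.realCharpoly, Polynomial.eval_prod]
  refine mul_eq_zero_of_right _ (Finset.prod_eq_zero (Finset.mem_univ i) ?_)
  simp
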